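/- Let X be a complex Banach space with dim X > 2 and let 𝒩 be a non-trivial nest on X with {0} ⊊ {0}_+. Then for every n ≥ 2 and every Lie n-derivation L : Alg 𝒩 → B(X) there exist a derivation D : Alg 𝒩 → B(X) and a linear map H : Alg 𝒩 → ℂI vanishing on every (n−1)-th commutator p_n(A_1,…,A_n) with A_1,…,A_n ∈ Alg 𝒩 such that L = D + H; moreover, if L is continuous then D and H can be chosen continuous. -/

import Mathlib

open scoped Classical

set_option synthInstance.maxHeartbeats 1000000
set_option maxHeartbeats 1000000

noncomputable section

/-- The `(n-1)`-th commutator polynomial `p_n(x_1, …, x_n)`, defined recursively by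
`p_1(x_1) = x_1` and `p_k(x_1, …, x_k) = [p_{k-1}(x_1, …, x_{k-1}), x_k]`. -/
def commPoly {A : Type*} [NonUnitalNonAssocRing A] : (n : ℕ) → (Fin n → A) → A
  | 0, _ => 0
  | 1, a => a 0
  | n + 2, a =>
      commPoly (n + 1) (fun i => a i.castSucc) * a (Fin.last (n + 1)) -
        a (Fin.last (n + 1)) * commPoly (n + 1) (fun i => a i.castSucc)

/-- A nest of closed subspaces of `X`: it contains `{0}` and `X`, is totally ordered by
inclusion, is closed under arbitrary intersections, and contains the norm-closed linear
span of the union of any subfamily. -/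
structure IsNest {X : Type*} [NormedAddCommGroup X] [NormedSpace ℂ X]
    (𝒩 : Set (Submodule ℂ X)) : Prop where
  closed : ∀ N ∈ 𝒩, IsClosed (N : Set X)
  bot_mem : (⊥ : Submodule ℂ X) ∈ 𝒩
  top_mem : (⊤ : Submodule ℂ X) ∈ 𝒩
  total : ∀ N₁ ∈ 𝒩, ∀ N₂ ∈ 𝒩, N₁ ≤ N₂ ∨ N₂ ≤ N₁
  sInf_mem : ∀ S ⊆ 𝒩, sInf S ∈ 𝒩
  closure_sSup_mem : ∀ S ⊆ 𝒩, (sSup S).topologicalClosure ∈ 𝒩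

/-- The nest algebra `Alg 𝒩` of all bounded operators leaving every member of `𝒩`
invariant. -/
def nestAlgebra {X : Type*} [NormedAddCommGroup X] [NormedSpace ℂ X]
    (𝒩 : Set (Submodule ℂ X)) : Subalgebra ℂ (X →L[ℂ] X) where
  carrier := {T : X →L[ℂ] X | ∀ N ∈ 𝒩, ∀ x ∈ N, T x ∈ N}
  mul_mem' := fun {a b} ha hb N hN x hx => ha N hN _ (hb N hN x hx)
  one_mem' := fun N _ x hx => hx
  add_mem' := fun {a b} ha hb N hN x hx => N.add_mem (ha N hN x hx) (hb N hN x hx)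
  zero_mem' := fun N _ _ _ => N.zero_mem
  algebraMap_mem' := fun r N hN x hx => by
    simpa [Algebra.algebraMap_eq_smul_one] using N.smul_mem r hx

/-- `{0}₊` : the intersection of all members of `𝒩` different from `{0}`. -/
def nestZeroPlus {X : Type*} [NormedAddCommGroup X] [NormedSpace ℂ X]
    (𝒩 : Set (Submodule ℂ X)) : Submodule ℂ X :=
  sInf {N | N ∈ 𝒩 ∧ N ≠ (⊥ : Submodule ℂ X)}

/-- `L` is a Lie `n`-derivation on the subalgebra `𝒜` of `B`:
`L(p_n(a_1,…,a_n)) = ∑_k p_n(a_1, …, a_{k-1}, L(a_k), a_{k+1}, …, a_n)`. -/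
def IsLieNDeriv {B : Type*} [Ring B] [Algebra ℂ B] (𝒜 : Subalgebra ℂ B)
    (n : ℕ) (L : ↥𝒜 →ₗ[ℂ] B) : Prop :=
  ∀ a : Fin n → ↥𝒜,
    L (commPoly n a) =
      ∑ k : Fin n, commPoly n (Function.update (fun i => ((a i : B))) k (L (a k)))

/-- `D` is an (associative) derivation on the subalgebra `𝒜` of `B`. -/
def IsDerivOn {B : Type*} [Ring B] [Algebra ℂ B] (𝒜 : Subalgebra ℂ B)
    (D : ↥𝒜 →ₗ[ℂ] B) : Prop :=
  ∀ a b : ↥𝒜, D (a * b) = D a * (b : B) + (a : B) * D b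

section HeadTuple

variable {A : Type*}

/-- The tuple `(t, p, …, p)`. -/
def headTuple (p t : A) (n : ℕ) : Fin (n + 1) → A := Function.update (fun _ => p) 0 t

lemma headTuple_castSucc (p t : A) (n : ℕ) :
    (fun i : Fin (n + 1) => headTuple p t (n + 1) i.castSucc) = headTuple p t n := by
  funext i
  by_cases hi : i = 0
  · subst hi
    simp [headTuple]
  · simp [headTuple, hi]

lemma headTuple_last (p t : A) (n : ℕ) : headTuple p t (n + 1) (Fin.last (n + 1)) = p := by
  simp [headTuple]

lemma update_headTuple_zero (p t s : A) (n : ℕ) :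
    Function.update (headTuple p t n) 0 s = headTuple p s n := by
  simp [headTuple]

end HeadTuple

section CommPoly

variable {A : Type*} [Ring A]

lemma commPoly_update_last (n : ℕ) (a : Fin (n + 2) → A) (v : A) :
    commPoly (n + 2) (Function.update a (Fin.last (n + 1)) v) =
      commPoly (n + 1) (fun i => a i.castSucc) * v -
        v * commPoly (n + 1) (fun i => a i.castSucc) := by
  have h : (fun i : Fin (n + 1) => Function.update a (Fin.last (n + 1)) v i.castSucc) =
      fun i => a i.castSucc := by
    funext i
    exact Function.update_of_ne (Fin.castSucc_lt_last i).ne _ _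
  simp only [commPoly, h, Function.update_self]

lemma commPoly_update_castSucc (n : ℕ) (a : Fin (n + 2) → A) (j : Fin (n + 1)) (v : A) :
    commPoly (n + 2) (Function.update a j.castSucc v) =
      commPoly (n + 1) (Function.update (fun i => a i.castSucc) j v) * a (Fin.last (n + 1)) -
        a (Fin.last (n + 1)) *
          commPoly (n + 1) (Function.update (fun i => a i.castSucc) j v) := by
  have h : (fun i : Fin (n + 1) => Function.update a j.castSucc v i.castSucc) =
      Function.update (fun i => a i.castSucc) j v := by
    funext i
    by_cases hij : i = j
    · subst hij
      simp
    · rw [Function.update_of_ne hij, Function.update_of_ne]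
      simpa using hij
  simp only [commPoly, h, Function.update_of_ne (Fin.castSucc_lt_last j).ne']

lemma commPoly_update_sub (n : ℕ) (a : Fin n → A) (k : Fin n) (x y : A) :
    commPoly n (Function.update a k (x - y)) =
      commPoly n (Function.update a k x) - commPoly n (Function.update a k y) := by
  induction n with
  | zero => exact k.elim0
  | succ n ih =>
    cases n with
    | zero =>
      obtain rfl : k = 0 := Fin.fin_one_eq_zero k
      simp [commPoly]
    | succ n =>
      induction k using Fin.lastCases with
      | last =>
        simp only [commPoly_update_last]
        noncomm_ring
      | cast j =>
        simp only [commPoly_update_castSucc, ih]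
        noncomm_ring

/-- A commutator polynomial with at least two entries vanishes if one entry is central. -/
lemma commPoly_update_of_central (n : ℕ) (a : Fin (n + 2) → A) (k : Fin (n + 2)) (c : A)
    (hc : ∀ b, c * b = b * c) : commPoly (n + 2) (Function.update a k c) = 0 := by
  induction n with
  | zero =>
    induction k using Fin.lastCases with
    | last => rw [commPoly_update_last, hc, sub_self]
    | cast j =>
      obtain rfl : j = 0 := Fin.fin_one_eq_zero j
      rw [commPoly_update_castSucc]
      simp [commPoly, hc]
  | succ n ih =>
    induction k using Fin.lastCases with
    | last => rw [commPoly_update_last, hc, sub_self]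
    | cast j => rw [commPoly_update_castSucc, ih, zero_mul, mul_zero, sub_self]

lemma commPoly_headTuple_succ (p t : A) (n : ℕ) :
    commPoly (n + 2) (headTuple p t (n + 1)) =
      commPoly (n + 1) (headTuple p t n) * p - p * commPoly (n + 1) (headTuple p t n) := by
  simp only [commPoly, headTuple_castSucc, headTuple_last]

lemma commPoly_headTuple_zero (p t : A) : commPoly 1 (headTuple p t 0) = t := by
  simp [commPoly, headTuple]

lemma commPoly_headTuple {p : A} (hp : p * p = p) (t : A) (n : ℕ) :
    commPoly (n + 2) (headTuple p t (n + 1)) =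
      (-1) ^ (n + 1) * (p * t - p * t * p) + (t * p - p * t * p) := by
  have hp' : ∀ y, p * (p * y) = p * y := fun y => by rw [← mul_assoc, hp]
  induction n with
  | zero =>
    rw [commPoly_headTuple_succ, commPoly_headTuple_zero]
    noncomm_ring
  | succ n ih =>
    rw [commPoly_headTuple_succ, ih]
    rcases neg_one_pow_eq_or A (n + 1) with h | h <;> rw [pow_succ _ (n + 1), h] <;>
      simp only [mul_sub, sub_mul, mul_add, add_mul, mul_assoc, hp, hp', neg_mul, mul_neg,
        one_mul, mul_one] <;> abel

lemma commPoly_headTuple_of_eq_add {p : A} (hp : p * p = p) {t : A}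
    (ht : t = p * t + t * p) (n : ℕ) :
    commPoly (n + 1) (headTuple p t n) = (-1) ^ n * (p * t) + t * p := by
  cases n with
  | zero => simpa [commPoly_headTuple_zero] using ht
  | succ n =>
    have h : p * t * p = 0 := by
      have h := congrArg (p * ·) ht
      simp only [mul_add, ← mul_assoc, hp] at h
      simpa using h
    rw [commPoly_headTuple hp, h, sub_zero, sub_zero]

lemma commPoly_update_headTuple {p t m : A} (hpt : p * t = t) (htp : t * p = 0)
    (hpm : p * m = m * p) (n : ℕ) (k : Fin (n + 2)) (hk : k ≠ 0) :
    commPoly (n + 2) (Function.update (headTuple p t (n + 1)) k m) =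
      (-1) ^ n * (t * m - m * t) := by
  have hhead : ∀ n, commPoly (n + 1) (headTuple p t n) = (-1) ^ n * t := by
    intro n
    induction n with
    | zero => simp [commPoly_headTuple_zero]
    | succ n ih =>
      rw [commPoly_headTuple_succ, ih]
      rcases neg_one_pow_eq_or A n with h | h <;> simp [pow_succ, h, hpt, htp]
  have hlast : ∀ n, commPoly (n + 2)
      (Function.update (headTuple p t (n + 1)) (Fin.last (n + 1)) m) =
        (-1) ^ n * (t * m - m * t) := by
    intro n
    rw [commPoly_update_last, headTuple_castSucc, hhead]
    rcases neg_one_pow_eq_or A n with h | h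
    · simp [h]
    · simp [h, neg_add_eq_sub]
  induction n with
  | zero =>
    induction k using Fin.lastCases with
    | last => exact hlast 0
    | cast j =>
      obtain rfl : j = 0 := Fin.fin_one_eq_zero j
      exact absurd rfl hk
  | succ n ih =>
    induction k using Fin.lastCases with
    | last => exact hlast (n + 1)
    | cast j =>
      have hj : j ≠ 0 := by
        rintro rfl
        exact hk rfl
      rw [commPoly_update_castSucc, headTuple_castSucc, headTuple_last, ih j hj]
      have h1 : (t * m - m * t) * p = 0 := by
        rw [sub_mul, mul_assoc, ← hpm, ← mul_assoc, htp, mul_assoc, htp]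
        simp
      have h2 : p * (t * m - m * t) = t * m - m * t := by
        rw [mul_sub, ← mul_assoc, hpt, ← mul_assoc, hpm, mul_assoc, hpt]
      rcases neg_one_pow_eq_or A n with h | h <;>
        simp only [pow_succ, h, neg_mul, mul_neg, one_mul, mul_one, h1, h2] <;> simp

end CommPoly

section Derivations

variable {B : Type*} [Ring B] [Algebra ℂ B] {𝒜 : Subalgebra ℂ B}

lemma coe_commPoly (n : ℕ) (a : Fin n → 𝒜) :
    ((commPoly n a : 𝒜) : B) = commPoly n (fun i => (a i : B)) := by
  induction n with
  | zero => rfl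
  | succ n ih =>
    cases n with
    | zero => rfl
    | succ n => simp only [commPoly, AddSubgroupClass.coe_sub, MulMemClass.coe_mul, ih]

lemma IsDerivOn.isLieNDeriv {D : 𝒜 →ₗ[ℂ] B} (hD : IsDerivOn 𝒜 D) (n : ℕ) :
    IsLieNDeriv 𝒜 n D := by
  induction n with
  | zero =>
    intro a
    simp [commPoly]
  | succ n ih =>
    intro a
    cases n with
    | zero => simp [commPoly]
    | succ n =>
      rw [Fin.sum_univ_castSucc]
      simp only [commPoly_update_castSucc, commPoly_update_last]
      rw [Finset.sum_sub_distrib, ← Finset.sum_mul, ← Finset.mul_sum,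
        ← ih (fun i => a i.castSucc)]
      simp only [commPoly, map_sub, hD _ _, coe_commPoly]
      abel

lemma IsLieNDeriv.sub {n : ℕ} {L D : 𝒜 →ₗ[ℂ] B} (hL : IsLieNDeriv 𝒜 n L)
    (hD : IsLieNDeriv 𝒜 n D) : IsLieNDeriv 𝒜 n (L - D) := by
  intro a
  simp only [LinearMap.sub_apply, commPoly_update_sub, Finset.sum_sub_distrib, ← hL a, ← hD a]

/-- The inner derivation `t ↦ t z - z t`. -/
def innerDeriv (𝒜 : Subalgebra ℂ B) (z : B) : 𝒜 →ₗ[ℂ] B :=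
  (LinearMap.mulRight ℂ z - LinearMap.mulLeft ℂ z) ∘ₗ 𝒜.val.toLinearMap

lemma innerDeriv_apply (z : B) (t : 𝒜) : innerDeriv 𝒜 z t = t * z - z * t := rfl

lemma isDerivOn_innerDeriv (z : B) : IsDerivOn 𝒜 (innerDeriv 𝒜 z) := by
  intro a b
  simp only [innerDeriv_apply, MulMemClass.coe_mul]
  noncomm_ring

lemma IsDerivOn.add {D E : 𝒜 →ₗ[ℂ] B} (hD : IsDerivOn 𝒜 D) (hE : IsDerivOn 𝒜 E) :
    IsDerivOn 𝒜 (D + E) := by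
  intro a b
  simp only [LinearMap.add_apply, hD a b, hE a b]
  noncomm_ring

lemma coe_headTuple (p t : 𝒜) (n : ℕ) (i : Fin (n + 1)) :
    ((headTuple p t n i : 𝒜) : B) = headTuple (p : B) t n i := by
  by_cases hi : i = 0
  · subst hi
    simp [headTuple]
  · simp [headTuple, hi]

/-- A Lie `(m+2)`-derivation with `L p` central, evaluated on `(t, p, …, p, s)`. -/
lemma IsLieNDeriv.apply_head_last {m : ℕ} {L : 𝒜 →ₗ[ℂ] B} (hL : IsLieNDeriv 𝒜 (m + 2) L)
    {p : 𝒜} (hp : ∀ b, L p * b = b * L p) (t s : 𝒜) :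
    L (commPoly (m + 1) (headTuple p t m) * s - s * commPoly (m + 1) (headTuple p t m)) =
      commPoly (m + 1) (headTuple (p : B) (L t) m) * s -
        s * commPoly (m + 1) (headTuple (p : B) (L t) m) +
      (commPoly (m + 1) (headTuple (p : B) t m) * L s -
        L s * commPoly (m + 1) (headTuple (p : B) t m)) := by
  have h := hL (Function.update (headTuple p t (m + 1)) (Fin.last (m + 1)) s)
  have hcoe : (fun i => (Function.update (headTuple p t (m + 1)) (Fin.last (m + 1)) s i : B)) =
      Function.update (headTuple (p : B) t (m + 1)) (Fin.last (m + 1)) (s : B) := by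
    funext i
    by_cases hi : i = Fin.last (m + 1)
    · subst hi
      simp
    · simp only [Function.update_of_ne hi, coe_headTuple]
  rw [hcoe, commPoly_update_last, headTuple_castSucc,
    Fintype.sum_eq_add (0 : Fin (m + 2)) (Fin.last (m + 1)) (Fin.last_pos).ne] at h
  · have h0 : (Function.update (headTuple p t (m + 1)) (Fin.last (m + 1)) s) 0 = t := by
      rw [Function.update_of_ne (Fin.last_pos).ne]
      simp [headTuple]
    rw [h0, Function.update_self, Function.update_idem, commPoly_update_last,
      Function.update_comm (Fin.last_pos).ne', update_headTuple_zero, commPoly_update_last,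
      headTuple_castSucc, headTuple_castSucc] at h
    exact h
  · rintro k ⟨hk0, hkl⟩
    refine commPoly_update_of_central _ _ _ _ ?_
    rw [Function.update_of_ne hkl]
    simpa [headTuple, hk0] using hp

end Derivations

section Corner

variable {B : Type*} [Ring B] [Algebra ℂ B] {𝒜 : Subalgebra ℂ B}

lemma eq_zero_of_add_self {x : B} (hx : x + x = 0) : x = 0 := by
  rw [← two_smul ℂ] at hx
  exact (smul_eq_zero.mp hx).resolve_left two_ne_zero

/-- The part of `L` left after subtracting its component in the scalars. -/
def scalarFree (τ : B →ₗ[ℂ] ℂ) (L : 𝒜 →ₗ[ℂ] B) : 𝒜 →ₗ[ℂ] B :=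
  L - (LinearMap.toSpanSingleton ℂ B 1) ∘ₗ τ ∘ₗ L

lemma scalarFree_apply (τ : B →ₗ[ℂ] ℂ) (L : 𝒜 →ₗ[ℂ] B) (t : 𝒜) :
    scalarFree τ L t = L t - τ (L t) • 1 := rfl

/-- `p` is a minimal idempotent of the prime algebra `B`, with `p y p = τ(y) p`, and the right
ideal `p B` is contained in `𝒜`. -/
structure IsMinimalCorner (𝒜 : Subalgebra ℂ B) (p : 𝒜) (τ : B →ₗ[ℂ] ℂ) : Prop where
  prime : ∀ a b : B, (∀ z, a * z * b = 0) → a = 0 ∨ b = 0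
  idem : p * p = p
  ne_zero : p ≠ 0
  corner : ∀ y : B, (p : B) * y * p = τ y • (p : B)
  mem : ∀ y : B, (p : B) * y ∈ 𝒜

namespace IsMinimalCorner

variable {p : 𝒜} {τ : B →ₗ[ℂ] ℂ}

lemma coe_idem (h : IsMinimalCorner 𝒜 p τ) : (p : B) * p = p := by
  exact_mod_cast congrArg (Subtype.val) h.idem

lemma coe_ne_zero (h : IsMinimalCorner 𝒜 p τ) : (p : B) ≠ 0 := by
  exact_mod_cast h.ne_zero

lemma tau_eq_zero (h : IsMinimalCorner 𝒜 p τ) {y : B} (hy : (p : B) * y * p = 0) : τ y = 0 := by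
  rw [h.corner] at hy
  exact (smul_eq_zero.mp hy).resolve_right h.coe_ne_zero

/-- Left multiplications by elements of `p B` separate the points of `B`. -/
lemma eq_zero_of_forall (h : IsMinimalCorner 𝒜 p τ) {y : B}
    (hy : ∀ z : B, (p : B) * z * y = 0) : y = 0 :=
  (h.prime _ _ hy).resolve_left h.coe_ne_zero

/-- Right multiplications by elements of `B p` separate the points of `B`. -/
lemma eq_zero_of_forall' (h : IsMinimalCorner 𝒜 p τ) {y : B}
    (hy : ∀ z : B, y * z * p = 0) : y = 0 :=
  (h.prime _ _ hy).resolve_right h.coe_ne_zero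

lemma mul_p_eq_zero (h : IsMinimalCorner 𝒜 p τ) {y t : B} (ht : (p : B) * t = t) (ht0 : t ≠ 0)
    (hyt : y * t = 0) : y * p = 0 := by
  by_contra hne
  refine ht0 (h.eq_zero_of_forall' fun z => ?_)
  have h1 : t * z * p = τ (t * z) • (p : B) := by
    rw [← h.corner, ← mul_assoc (p : B), ht]
  have h2 : τ (t * z) • (y * p) = 0 := by
    rw [← mul_smul_comm, ← h1, ← mul_assoc, ← mul_assoc, hyt, zero_mul, zero_mul]
  rw [h1, (smul_eq_zero_iff_left hne).mp h2, zero_smul]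

lemma p_mul_eq_zero (h : IsMinimalCorner 𝒜 p τ) {y t : B} (ht : t * (p : B) = t) (ht0 : t ≠ 0)
    (hyt : t * y = 0) : p * y = 0 := by
  by_contra hne
  refine ht0 (h.eq_zero_of_forall fun z => ?_)
  have h1 : p * z * t = τ (z * t) • (p : B) := by
    rw [← h.corner, mul_assoc, mul_assoc, mul_assoc, ht]
  have h2 : τ (z * t) • (p * y) = 0 := by
    rw [← smul_mul_assoc, ← h1, mul_assoc, hyt, mul_zero]
  rw [h1, (smul_eq_zero_iff_left hne).mp h2, zero_smul]

variable {m : ℕ} {L : 𝒜 →ₗ[ℂ] B}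

/-- If `L p` commutes with `p`, then it commutes with `p 𝒜 (1 - p)`. -/
lemma commute_of_corner (h : IsMinimalCorner 𝒜 p τ) (hL : IsLieNDeriv 𝒜 (m + 2) L)
    (hpL : (p : B) * L p = L p * p) {t : 𝒜} (hpt : p * t = t) (htp : t * p = 0) :
    t * L p = L p * t := by
  rw [← sub_eq_zero]
  have hP := h.coe_idem
  have hPt : (p : B) * t = t := by exact_mod_cast congrArg Subtype.val hpt
  have htP : (t : B) * p = 0 := by exact_mod_cast congrArg Subtype.val htp
  have h1 := hL (headTuple p t (m + 1))
  simp only [coe_headTuple] at h1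
  rw [Fin.sum_univ_succ, update_headTuple_zero, commPoly_headTuple hP,
    commPoly_headTuple h.idem,
    Finset.sum_congr rfl fun k _ => by
      rw [show headTuple p t (m + 1) k.succ = p by simp [headTuple],
        commPoly_update_headTuple hPt htP hpL m k.succ (Fin.succ_ne_zero k)]] at h1
  rw [show headTuple p t (m + 1) 0 = t by simp [headTuple]] at h1
  simp only [hpt, htp, sub_zero, add_zero, Finset.sum_const, Finset.card_univ,
    Fintype.card_fin] at h1
  have hPP : ∀ y, (p : B) * (p * y) = p * y := fun y => by rw [← mul_assoc, hP]
  have hX1 : (p : B) * (t * L p - L p * t) = t * L p - L p * t := by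
    rw [mul_sub, ← mul_assoc, hPt, ← mul_assoc, hpL, mul_assoc, hPt]
  have hX2 : (t * L p - L p * t) * (p : B) = 0 := by
    rw [sub_mul, mul_assoc, ← hpL, ← mul_assoc, htP, mul_assoc, htP, zero_mul, mul_zero, sub_zero]
  generalize (t : B) * L p - L p * t = x at h1 hX1 hX2 ⊢
  have h2 := congrArg (fun y => (p : B) * y * (1 - p)) h1
  have h3 : (m + 1) • x = 0 := by
    rcases Nat.even_or_odd m with hm | hm
    · simp only [hm.neg_one_pow, hm.add_one.neg_one_pow, neg_mul, one_mul, map_neg, mul_add,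
        add_mul, mul_sub, sub_mul, mul_neg, mul_one, mul_smul_comm, smul_mul_assoc, smul_zero,
        mul_assoc, hP, hPP, hX1, hX2] at h2
      linear_combination (norm := abel) -h2
    · simp only [hm.neg_one_pow, hm.add_one.neg_one_pow, neg_mul, one_mul, mul_add,
        add_mul, mul_sub, sub_mul, mul_neg, mul_one, mul_smul_comm, smul_mul_assoc, smul_zero,
        mul_assoc, hP, hPP, hX1, hX2, smul_neg] at h2
      linear_combination (norm := abel) h2
  have h4 : ((m + 1 : ℕ) : ℂ) • x = 0 := by
    rw [Nat.cast_smul_eq_nsmul, h3]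
  exact ((smul_eq_zero.mp h4).resolve_left (Nat.cast_ne_zero.mpr m.succ_ne_zero))

lemma apply_p_eq_smul (h : IsMinimalCorner 𝒜 p τ) (hL : IsLieNDeriv 𝒜 (m + 2) L)
    (hpL : (p : B) * L p = L p * p) : L p = τ (L p) • 1 := by
  have hP := h.coe_idem
  have h1 : (p : B) * L p = τ (L p) • (p : B) := by
    rw [← h.corner, mul_assoc, ← hpL, ← mul_assoc, hP]
  refine sub_eq_zero.mp (h.eq_zero_of_forall fun z => ?_)
  have h2 := h.commute_of_corner hL hpL (t := ⟨p * (z * (1 - p)), h.mem _⟩)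
    (Subtype.ext (by simp [← mul_assoc, hP])) (Subtype.ext (by simp [mul_assoc, sub_mul, hP]))
  have h3 : ∀ y, L p * (p * y) = τ (L p) • (p * y) := fun y => by
    rw [← mul_assoc, ← hpL, h1, smul_mul_assoc]
  simp only [mul_sub, sub_mul, mul_one, mul_assoc, h1, h3, mul_smul_comm] at h2 ⊢
  linear_combination (norm := abel) h2

/-- If `L p` is central, then `L` respects brackets with elements on which `ad p` is `-1`, both
before and after applying `L`. -/
lemma map_bracket (h : IsMinimalCorner 𝒜 p τ) (hL : IsLieNDeriv 𝒜 (m + 2) L)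
    (hc : ∀ b, L p * b = b * L p) {s : 𝒜} (hps : p * s = s) (hsp : s * p = 0)
    (hpLs : p * L s = L s) (hLsp : L s * p = 0) (t : 𝒜) :
    L (s * t - t * s) = L s * t - t * L s + (s * L t - L t * s) := by
  have hP := h.coe_idem
  have hPs : (p : B) * s = s := by exact_mod_cast congrArg Subtype.val hps
  have hsP : (s : B) * p = 0 := by exact_mod_cast congrArg Subtype.val hsp
  have h1 := hL.apply_head_last hc s t
  rw [commPoly_headTuple_of_eq_add h.idem (by rw [hps, hsp, add_zero]),
    commPoly_headTuple_of_eq_add hP (by rw [hpLs, hLsp, add_zero]),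
    commPoly_headTuple_of_eq_add hP (by rw [hPs, hsP, add_zero]),
    hps, hsp, hpLs, hLsp, hPs, hsP] at h1
  rcases Nat.even_or_odd m with hm | hm
  · simpa [hm.neg_one_pow] using h1
  · simp only [hm.neg_one_pow, neg_mul, one_mul, add_zero, mul_neg] at h1
    rw [← neg_sub', map_neg] at h1
    linear_combination (norm := abel) -h1

lemma map_ad_pow (h : IsMinimalCorner 𝒜 p τ) (hL : IsLieNDeriv 𝒜 (m + 2) L)
    (hc : ∀ b, L p * b = b * L p) (t : 𝒜) :
    L ((-1) ^ (m + 1) * (p * t - p * t * p) + (t * p - p * t * p)) =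
      (-1) ^ (m + 1) * (p * L t - p * L t * p) + (L t * p - p * L t * p) := by
  have h1 := hL.apply_head_last hc t p
  rwa [← commPoly_headTuple_succ, ← commPoly_headTuple_succ, commPoly_headTuple h.idem,
    commPoly_headTuple h.coe_idem, hc, sub_self, add_zero] at h1

lemma map_diag (h : IsMinimalCorner 𝒜 p τ) (hL : IsLieNDeriv 𝒜 (m + 2) L)
    (hc : ∀ b, L p * b = b * L p) {t : 𝒜} (hpt : p * t = 0) (htp : t * p = 0) :
    p * L t = L t * p := by
  have hP := h.coe_idem
  have hPP : ∀ y, (p : B) * (p * y) = p * y := fun y => by rw [← mul_assoc, hP]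
  have h1 := h.map_ad_pow hL hc t
  simp only [hpt, htp, zero_mul, mul_zero, sub_zero, add_zero, map_zero] at h1
  have h2 := congrArg (fun y => (p : B) * y) h1
  have h3 := congrArg (fun y => y * (p : B)) h1
  rcases Nat.even_or_odd m with hm | hm
  · simp only [hm.add_one.neg_one_pow, neg_mul, one_mul, mul_add, add_mul, mul_sub, sub_mul,
      mul_neg, mul_zero, zero_mul, mul_assoc, hP, hPP] at h2 h3
    linear_combination (norm := abel) h2 + h3
  · simp only [hm.add_one.neg_one_pow, one_mul, mul_add, add_mul, mul_sub, sub_mul,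
      mul_zero, zero_mul, mul_assoc, hP, hPP] at h2 h3
    linear_combination (norm := abel) h3 - h2

lemma map_upper (h : IsMinimalCorner 𝒜 p τ) (hL : IsLieNDeriv 𝒜 (m + 2) L)
    (hc : ∀ b, L p * b = b * L p) {t : 𝒜} (hpt : p * t = t) (htp : t * p = 0) :
    p * L t = L t ∧ L t * p = 0 := by
  have hP := h.coe_idem
  have hPP : ∀ y, (p : B) * (p * y) = p * y := fun y => by rw [← mul_assoc, hP]
  have hPt : (p : B) * t = t := by exact_mod_cast congrArg Subtype.val hpt
  have htP : (t : B) * p = 0 := by exact_mod_cast congrArg Subtype.val htp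
  have htP' : ∀ y, (t : B) * (p * y) = 0 := fun y => by rw [← mul_assoc, htP, zero_mul]
  suffices hLp : (p : B) * L t * p = 0 ∧ L t * p = 0 ∧ L t = p * L t + L t * p by
    obtain ⟨-, h2, h3⟩ := hLp
    rw [h2, add_zero] at h3
    exact ⟨h3.symm, h2⟩
  have h1 := h.map_ad_pow hL hc t
  simp only [hpt, htp, sub_zero, add_zero] at h1
  rcases Nat.even_or_odd m with hm | hm
  · simp only [hm.add_one.neg_one_pow, neg_mul, one_mul, map_neg] at h1
    have h2 := congrArg (fun y => (p : B) * y * p) h1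
    have h3 := congrArg (fun y => y * (p : B)) h1
    simp only [mul_assoc, mul_add, mul_sub, mul_neg, add_mul, neg_mul, sub_mul,
      hP, hPP] at h1 h2 h3
    have h4 : (p : B) * (L t * p) = 0 := by linear_combination (norm := abel) -h2
    simp only [h4] at h1 h3
    have h5 : L t * p = 0 := eq_zero_of_add_self (by linear_combination (norm := abel) -h3)
    simp only [h5] at h1
    refine ⟨by rw [mul_assoc, h4], h5, ?_⟩
    rw [h5]
    linear_combination (norm := abel) -h1
  · simp only [hm.add_one.neg_one_pow, one_mul] at h1
    have h2 := congrArg (fun y => (p : B) * y * p) h1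
    simp only [mul_assoc, mul_add, mul_sub, add_mul, sub_mul, hP, hPP] at h1 h2
    have h4 : (p : B) * (L t * p) = 0 := by linear_combination (norm := abel) h2
    have h5 : L t = p * L t + L t * p := by
      simp only [h4] at h1
      linear_combination (norm := abel) h1
    refine ⟨by rw [mul_assoc, h4], ?_, h5⟩
    rcases eq_or_ne t 0 with rfl | ht0
    · rw [map_zero, zero_mul]
    refine h.mul_p_eq_zero hPt (by exact_mod_cast ht0) ?_
    have h6 := hL.apply_head_last hc t t
    rw [commPoly_headTuple_of_eq_add h.idem (by rw [hpt, htp, add_zero]),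
      commPoly_headTuple_of_eq_add hP h5,
      commPoly_headTuple_of_eq_add hP (by rw [hPt, htP, add_zero]), hpt, htp, hPt, htP] at h6
    have h7 : (t : B) * L t = t * (L t * p) := by
      conv_lhs => rw [h5]
      rw [mul_add, htP', zero_add]
    have h8 := congrArg (fun y => (p : B) * y) h5
    have h9 := congrArg (fun y => y * (t : B)) h5
    simp only [add_mul, mul_assoc, hPt] at h9
    simp only [hm.neg_one_pow, neg_mul, one_mul, add_zero, mul_neg, sub_self, map_zero,
      add_mul, mul_add, mul_assoc, htP', hPt, neg_zero] at h6
    have h10 : (p : B) * (L t * t) = 0 := by linear_combination (norm := abel) -h9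
    rw [h10, ← h7] at h6
    have h11 : L t * t = t * L t := by
      refine sub_eq_zero.mp (eq_zero_of_add_self ?_)
      linear_combination (norm := abel) -h6
    rw [h11, ← mul_assoc, hPt] at h10
    rw [h11, h10]

lemma map_lower (h : IsMinimalCorner 𝒜 p τ) (hL : IsLieNDeriv 𝒜 (m + 2) L)
    (hc : ∀ b, L p * b = b * L p) {t : 𝒜} (hpt : p * t = 0) (htp : t * p = t) :
    L t * p = L t ∧ p * L t = 0 := by
  have hP := h.coe_idem
  have hPP : ∀ y, (p : B) * (p * y) = p * y := fun y => by rw [← mul_assoc, hP]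
  have hPt : (p : B) * t = 0 := by exact_mod_cast congrArg Subtype.val hpt
  have htP : (t : B) * p = t := by exact_mod_cast congrArg Subtype.val htp
  have htP' : ∀ y, (t : B) * (p * y) = t * y := fun y => by rw [← mul_assoc, htP]
  suffices hLp : (p : B) * L t * p = 0 ∧ p * L t = 0 ∧ L t = p * L t + L t * p by
    obtain ⟨-, h2, h3⟩ := hLp
    rw [h2, zero_add] at h3
    exact ⟨h3.symm, h2⟩
  have h1 := h.map_ad_pow hL hc t
  simp only [hpt, htp, sub_zero, zero_add, zero_mul, mul_zero] at h1
  rcases Nat.even_or_odd m with hm | hm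
  · simp only [hm.add_one.neg_one_pow, neg_mul, one_mul] at h1
    have h2 := congrArg (fun y => (p : B) * y * p) h1
    have h3 := congrArg (fun y => (p : B) * y) h1
    simp only [mul_assoc, mul_add, mul_sub, mul_neg, add_mul, neg_mul, sub_mul,
      hP, hPP] at h1 h2 h3
    have h4 : (p : B) * (L t * p) = 0 := by linear_combination (norm := abel) h2
    simp only [h4] at h1 h3
    have h5 : p * L t = 0 := eq_zero_of_add_self (by linear_combination (norm := abel) h3)
    simp only [h5] at h1
    refine ⟨by rw [mul_assoc, h4], h5, ?_⟩
    rw [h5]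
    linear_combination (norm := abel) h1
  · simp only [hm.add_one.neg_one_pow, one_mul] at h1
    have h2 := congrArg (fun y => (p : B) * y * p) h1
    simp only [mul_assoc, mul_add, mul_sub, add_mul, sub_mul, hP, hPP] at h1 h2
    have h4 : (p : B) * (L t * p) = 0 := by linear_combination (norm := abel) h2
    have h5 : L t = p * L t + L t * p := by
      simp only [h4] at h1
      linear_combination (norm := abel) h1
    refine ⟨by rw [mul_assoc, h4], ?_, h5⟩
    rcases eq_or_ne t 0 with rfl | ht0
    · rw [map_zero, mul_zero]
    refine h.p_mul_eq_zero htP (by exact_mod_cast ht0) ?_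
    have h6 := hL.apply_head_last hc t t
    rw [commPoly_headTuple_of_eq_add h.idem (by rw [hpt, htp, zero_add]),
      commPoly_headTuple_of_eq_add hP h5,
      commPoly_headTuple_of_eq_add hP (by rw [hPt, htP, zero_add]), hpt, htp, hPt, htP] at h6
    have h7 : (t : B) * (L t * p) = 0 := by rw [← htP', h4, mul_zero]
    have h9 := congrArg (fun y => y * (t : B)) h5
    simp only [add_mul, mul_assoc, hPt, mul_zero, add_zero] at h9
    simp only [hm.neg_one_pow, neg_mul, one_mul, mul_zero, zero_add, mul_neg, sub_self, map_zero,
      add_mul, mul_add, mul_assoc, htP', hPt, h7, ← h9, add_zero] at h6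
    have h11 : L t * t = t * L t := by
      refine sub_eq_zero.mp (eq_zero_of_add_self ?_)
      linear_combination (norm := abel) h6
    rw [← h11, h9, h11, ← mul_assoc, hPt, zero_mul]

/-- A linear map vanishes if it vanishes on the four Peirce components with respect to `p`. -/
lemma eq_zero_of_peirce (h : IsMinimalCorner 𝒜 p τ) (F : 𝒜 →ₗ[ℂ] B) (hFp : F p = 0)
    (hupper : ∀ t, p * t = t → t * p = 0 → F t = 0)
    (hlower : ∀ t, p * t = 0 → t * p = t → F t = 0)
    (hdiag : ∀ t, p * t = 0 → t * p = 0 → F t = 0) (t : 𝒜) : F t = 0 := by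
  have hp := h.idem
  have hpp : ∀ y, p * (p * y) = p * y := fun y => by rw [← mul_assoc, hp]
  have h1 : p * t * p = τ t • p := Subtype.ext (h.corner t)
  have h2 : t = p * t * p + (p * t - p * t * p) + (t * p - p * t * p) +
      (t - p * t - t * p + p * t * p) := by abel
  rw [h2, map_add, map_add, map_add, h1, map_smul, hFp, ← h1, hupper, hlower, hdiag]
  · simp
  all_goals simp [mul_add, add_mul, mul_sub, sub_mul, mul_assoc, hp, hpp]

lemma scalarFree_p (hLp : L p = τ (L p) • 1) :
    scalarFree τ L p = 0 := by
  rw [scalarFree_apply, ← hLp, sub_self]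

lemma scalarFree_upper (h : IsMinimalCorner 𝒜 p τ) (hL : IsLieNDeriv 𝒜 (m + 2) L)
    (hc : ∀ b, L p * b = b * L p) {t : 𝒜} (hpt : p * t = t) (htp : t * p = 0) :
    scalarFree τ L t = L t := by
  rw [scalarFree_apply, h.tau_eq_zero, zero_smul, sub_zero]
  rw [mul_assoc, (h.map_upper hL hc hpt htp).2, mul_zero]

lemma scalarFree_lower (h : IsMinimalCorner 𝒜 p τ) (hL : IsLieNDeriv 𝒜 (m + 2) L)
    (hc : ∀ b, L p * b = b * L p) {t : 𝒜} (hpt : p * t = 0) (htp : t * p = t) :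
    scalarFree τ L t = L t := by
  rw [scalarFree_apply, h.tau_eq_zero, zero_smul, sub_zero]
  rw [(h.map_lower hL hc hpt htp).2, zero_mul]

lemma p_mul_map_diag (h : IsMinimalCorner 𝒜 p τ) (hL : IsLieNDeriv 𝒜 (m + 2) L)
    (hc : ∀ b, L p * b = b * L p) {t : 𝒜} (hpt : p * t = 0) (htp : t * p = 0) :
    p * L t = τ (L t) • (p : B) := by
  rw [← h.corner, mul_assoc, ← h.map_diag hL hc hpt htp, ← mul_assoc, h.coe_idem]

lemma scalarFree_p_mul (h : IsMinimalCorner 𝒜 p τ) (hL : IsLieNDeriv 𝒜 (m + 2) L)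
    (hc : ∀ b, L p * b = b * L p) (hLp : L p = τ (L p) • 1) (t : 𝒜) :
    scalarFree τ L (p * t) = p * scalarFree τ L t := by
  refine sub_eq_zero.mp (h.eq_zero_of_peirce (scalarFree τ L ∘ₗ LinearMap.mulLeft ℂ p -
    LinearMap.mulLeft ℂ (p : B) ∘ₗ scalarFree τ L) ?_ ?_ ?_ ?_ t) <;>
    simp only [LinearMap.sub_apply, LinearMap.comp_apply, LinearMap.mulLeft_apply]
  · rw [h.idem, scalarFree_p hLp, mul_zero, sub_zero]
  · intro t hpt htp
    rw [hpt, h.scalarFree_upper hL hc hpt htp, (h.map_upper hL hc hpt htp).1, sub_self]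
  · intro t hpt htp
    rw [hpt, h.scalarFree_lower hL hc hpt htp, (h.map_lower hL hc hpt htp).2, map_zero, sub_self]
  · intro t hpt htp
    rw [hpt, scalarFree_apply _ _ t, mul_sub, h.p_mul_map_diag hL hc hpt htp, mul_smul_comm,
      mul_one, sub_self, map_zero, sub_self]

lemma upper_mul_lower (h : IsMinimalCorner 𝒜 p τ) {s t : 𝒜} (hps : p * s = s)
    (htp : t * p = t) : s * t = τ ((s : B) * t) • p := by
  have hPs : (p : B) * s = s := by exact_mod_cast congrArg Subtype.val hps
  have htP : (t : B) * p = t := by exact_mod_cast congrArg Subtype.val htp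
  have h1 := h.corner ((s : B) * t)
  rw [← mul_assoc, hPs, mul_assoc, htP] at h1
  exact Subtype.ext h1

lemma map_upper_mul_diag (h : IsMinimalCorner 𝒜 p τ) (hL : IsLieNDeriv 𝒜 (m + 2) L)
    (hc : ∀ b, L p * b = b * L p) {s : 𝒜} (hps : p * s = s) (hsp : s * p = 0)
    {t : 𝒜} (hpt : p * t = 0) (htp : t * p = 0) :
    L (s * t) = L s * t + s * L t - τ (L t) • (s : B) := by
  obtain ⟨hpLs, hLsp⟩ := h.map_upper hL hc hps hsp
  have hPs : (p : B) * s = s := by exact_mod_cast congrArg Subtype.val hps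
  have htP : (t : B) * p = 0 := by exact_mod_cast congrArg Subtype.val htp
  have h1 := h.map_bracket hL hc hps hsp hpLs hLsp t
  have h2 : t * s = 0 := by rw [← hps, ← mul_assoc, htp, zero_mul]
  have h3 : (t : B) * L s = 0 := by rw [← hpLs, ← mul_assoc, htP, zero_mul]
  have h4 : L t * s = τ (L t) • (s : B) := by
    rw [← hPs, ← mul_assoc, ← h.map_diag hL hc hpt htp, h.p_mul_map_diag hL hc hpt htp,
      smul_mul_assoc, hPs]
  rw [h2, h3, h4, sub_zero, sub_zero] at h1
  rw [h1, add_sub_assoc]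

lemma map_upper_mul_lower (h : IsMinimalCorner 𝒜 p τ) (hL : IsLieNDeriv 𝒜 (m + 2) L)
    (hc : ∀ b, L p * b = b * L p) (hLp : L p = τ (L p) • 1)
    {s : 𝒜} (hps : p * s = s) (hsp : s * p = 0)
    {t : 𝒜} (hpt : p * t = 0) (htp : t * p = t) :
    L s * t + s * L t = 0 := by
  rcases eq_or_ne s 0 with rfl | hs0
  · simp
  obtain ⟨hpLs, hLsp⟩ := h.map_upper hL hc hps hsp
  obtain ⟨hLtp, hpLt⟩ := h.map_lower hL hc hpt htp
  have hPs : (p : B) * s = s := by exact_mod_cast congrArg Subtype.val hps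
  have hsP : (s : B) * p = 0 := by exact_mod_cast congrArg Subtype.val hsp
  have hPt : (p : B) * t = 0 := by exact_mod_cast congrArg Subtype.val hpt
  have hst := h.upper_mul_lower hps htp
  have hST : (s : B) * t = τ ((s : B) * t) • (p : B) := congrArg Subtype.val hst
  have hLst : L (s * t) = (τ ((s : B) * t) * τ (L p)) • 1 := by
    rw [hst, map_smul, hLp, smul_smul, ← hLp]
  generalize τ ((s : B) * t) = c at hst hST hLst
  have hpts : p * (t * s) = 0 := by rw [← mul_assoc, hpt, zero_mul]
  have htsp : t * s * p = 0 := by rw [mul_assoc, hsp, mul_zero]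
  have hPLts := h.p_mul_map_diag hL hc hpts htsp
  have hsLts := h.map_upper_mul_diag hL hc hps hsp hpts htsp
  rw [← mul_assoc, hst, smul_mul_assoc, hps, map_smul, MulMemClass.coe_mul] at hsLts
  have hbr := h.map_bracket hL hc hps hsp hpLs hLsp t
  rw [map_sub, hLst] at hbr
  generalize τ (L (t * s)) = k at hPLts hsLts
  generalize L (t * s) = y at hbr hPLts hsLts
  have hsLs : (s : B) * L s = 0 := by rw [← hpLs, ← mul_assoc, hsP, zero_mul]
  have hss : (s : B) * s = 0 :=
    calc (s : B) * s = s * (p * s) := by rw [hPs]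
      _ = 0 := by rw [← mul_assoc, hsP, zero_mul]
  have h1 := congrArg (fun y => (p : B) * y) hbr
  have h2 := congrArg (fun y => (s : B) * y) hbr
  simp only [mul_sub, mul_add, ← mul_assoc, hPs, hPt, hpLs, hpLt, hPLts, hsLs, hss, hST,
    mul_smul_comm, smul_mul_assoc, mul_one, zero_mul, sub_zero, zero_sub] at h1 h2
  have h3 : ((c * τ (L p) - k) • (p : B)) = L s * t + s * L t := by
    rw [sub_smul, h1]
  have h4 := congrArg (fun y => y * (s : B)) h3
  simp only [smul_mul_assoc, hPs, add_mul] at h4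
  have h5 : (c * τ (L p) - k) • (s : B) = 0 := by
    refine eq_zero_of_add_self ?_
    rw [sub_smul] at h4 ⊢
    simp only [mul_assoc] at h2 hsLts h4
    linear_combination (norm := abel) h2 - hsLts + h4
  have hs0' : (s : B) ≠ 0 := by exact_mod_cast hs0
  rw [← h3, (smul_eq_zero.mp h5).resolve_right hs0', zero_smul]

lemma scalarFree_upper_mul (h : IsMinimalCorner 𝒜 p τ) (hL : IsLieNDeriv 𝒜 (m + 2) L)
    (hc : ∀ b, L p * b = b * L p) (hLp : L p = τ (L p) • 1)
    {s : 𝒜} (hps : p * s = s) (hsp : s * p = 0) (t : 𝒜) :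
    scalarFree τ L (s * t) = scalarFree τ L s * t + s * scalarFree τ L t := by
  obtain ⟨hpLs, hLsp⟩ := h.map_upper hL hc hps hsp
  have hsP : (s : B) * p = 0 := by exact_mod_cast congrArg Subtype.val hsp
  rw [h.scalarFree_upper hL hc hps hsp]
  refine sub_eq_zero.mp (h.eq_zero_of_peirce (scalarFree τ L ∘ₗ LinearMap.mulLeft ℂ s -
    (LinearMap.mulLeft ℂ (L s) ∘ₗ 𝒜.val.toLinearMap +
      LinearMap.mulLeft ℂ (s : B) ∘ₗ scalarFree τ L)) ?_ ?_ ?_ ?_ t) <;>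
    simp only [LinearMap.sub_apply, LinearMap.add_apply, LinearMap.comp_apply,
      LinearMap.mulLeft_apply, AlgHom.toLinearMap_apply, Subalgebra.coe_val]
  · rw [hsp, hLsp, scalarFree_p hLp, mul_zero, map_zero, add_zero, sub_zero]
  · intro t hpt htp
    have hPt : (p : B) * t = t := by exact_mod_cast congrArg Subtype.val hpt
    rw [h.scalarFree_upper hL hc hpt htp, ← (h.map_upper hL hc hpt htp).1, ← hPt, ← hpt,
      ← mul_assoc, ← mul_assoc, ← mul_assoc, hsp, hLsp, hsP]
    simp
  · intro t hpt htp
    have hst := h.upper_mul_lower hps htp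
    rw [h.scalarFree_lower hL hc hpt htp, h.map_upper_mul_lower hL hc hLp hps hsp hpt htp, hst,
      map_smul, scalarFree_p hLp, smul_zero, sub_zero]
  · intro t hpt htp
    rw [h.scalarFree_upper hL hc (by rw [← mul_assoc, hps]) (by rw [mul_assoc, htp, mul_zero]),
      h.map_upper_mul_diag hL hc hps hsp hpt htp, scalarFree_apply _ _ t, mul_sub, mul_smul_comm,
      mul_one]
    abel

lemma isDerivOn_scalarFree (h : IsMinimalCorner 𝒜 p τ) (hL : IsLieNDeriv 𝒜 (m + 2) L)
    (hpL : (p : B) * L p = L p * p) : IsDerivOn 𝒜 (scalarFree τ L) := by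
  have hLp := h.apply_p_eq_smul hL hpL
  have hc : ∀ b, L p * b = b * L p := fun b => by
    rw [hLp, smul_mul_assoc, mul_smul_comm, one_mul, mul_one]
  have hrow : ∀ r t : 𝒜, p * r = r →
      scalarFree τ L (r * t) = scalarFree τ L r * t + r * scalarFree τ L t := by
    intro r t hr
    have h1 : r * p = τ r • p := by
      rw [← hr]
      exact Subtype.ext ((h.corner r).trans (by rw [hr]; rfl))
    have h2 : r = τ r • p + (r - r * p) := by rw [h1]; abel
    have h3 := h.scalarFree_upper_mul hL hc hLp (s := r - r * p)
      (by rw [mul_sub, ← mul_assoc, hr]) (by rw [sub_mul, mul_assoc, h.idem, sub_self]) t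
    have h4 := h.scalarFree_p_mul hL hc hLp t
    rw [h2, add_mul, map_add, map_add, smul_mul_assoc, map_smul, map_smul, scalarFree_p hLp,
      h3, h4]
    simp only [AddMemClass.coe_add, SetLike.val_smul, add_mul, smul_mul_assoc, smul_zero, zero_add]
    abel
  intro a b
  refine sub_eq_zero.mp (h.eq_zero_of_forall fun z => ?_)
  let r : 𝒜 := ⟨p * z, h.mem z⟩
  have hr : p * r = r := Subtype.ext (by simp [r, ← mul_assoc, h.coe_idem])
  have h1 := hrow r (a * b) hr
  have h2 := hrow (r * a) b (by rw [← mul_assoc, hr])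
  rw [mul_assoc, h1, hrow r a hr] at h2
  simp only [MulMemClass.coe_mul] at h2
  change (r : B) * _ = 0
  simp only [mul_sub, mul_add, add_mul, ← mul_assoc] at h2 ⊢
  linear_combination (norm := abel) h2

/-- With `z = [p, L p]`, the map `L - [·, z]` is a derivation up to its scalar component. -/
lemma isDerivOn_scalarFree_sub_inner (h : IsMinimalCorner 𝒜 p τ)
    (hL : IsLieNDeriv 𝒜 (m + 2) L) :
    IsDerivOn 𝒜 (scalarFree τ (L - innerDeriv 𝒜 ((p : B) * L p - L p * p))) := by
  have hP := h.coe_idem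
  have hPP : ∀ y, (p : B) * (p * y) = p * y := fun y => by rw [← mul_assoc, hP]
  refine h.isDerivOn_scalarFree (hL.sub ((isDerivOn_innerDeriv _).isLieNDeriv _)) ?_
  simp only [LinearMap.sub_apply, innerDeriv_apply, mul_sub, sub_mul, mul_assoc, hP, hPP]
  abel

end IsMinimalCorner

/-- A Lie `n`-derivation with scalar values vanishes on `(n-1)`-th commutators. -/
lemma IsLieNDeriv.map_commPoly_eq_zero {m : ℕ} {H : 𝒜 →ₗ[ℂ] B} (hH : IsLieNDeriv 𝒜 (m + 2) H)
    (hc : ∀ a, ∃ c : ℂ, H a = c • (1 : B)) (a : Fin (m + 2) → 𝒜) :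
    H (commPoly (m + 2) a) = 0 := by
  rw [hH a]
  refine Finset.sum_eq_zero fun k _ => commPoly_update_of_central _ _ _ _ fun b => ?_
  obtain ⟨c, hc⟩ := hc (a k)
  rw [hc, smul_mul_assoc, mul_smul_comm, one_mul, mul_one]

end Corner

section NestAlgebra

variable {X : Type*} [NormedAddCommGroup X] [NormedSpace ℂ X]

lemma eq_zero_or_eq_zero_of_mul_mul (a b : X →L[ℂ] X) (hab : ∀ z, a * z * b = 0) :
    a = 0 ∨ b = 0 := by
  by_contra! hne
  obtain ⟨x, hx⟩ := ContinuousLinearMap.exists_ne_zero hne.1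
  obtain ⟨y, hy⟩ := ContinuousLinearMap.exists_ne_zero hne.2
  obtain ⟨g, hg⟩ := SeparatingDual.exists_eq_one (R := ℂ) hy
  have h := congrArg (fun T : X →L[ℂ] X => T y) (hab (g.smulRight x))
  simp [hg, hx] at h

lemma smulRight_mem_nestAlgebra {𝒩 : Set (Submodule ℂ X)} {x : X} (hx : x ∈ nestZeroPlus 𝒩)
    (f : X →L[ℂ] ℂ) : f.smulRight x ∈ nestAlgebra 𝒩 := by
  intro N hN y hy
  rcases eq_or_ne N ⊥ with rfl | hne
  · rw [(Submodule.mem_bot ℂ).mp hy, map_zero]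
    exact zero_mem _
  · exact N.smul_mem _ ((Submodule.mem_sInf.mp hx) N ⟨hN, hne⟩)

lemma isMinimalCorner_smulRight {𝒩 : Set (Submodule ℂ X)} {x : X} (hx : x ∈ nestZeroPlus 𝒩)
    (f : X →L[ℂ] ℂ) (hf : f x = 1) :
    IsMinimalCorner (nestAlgebra 𝒩) ⟨f.smulRight x, smulRight_mem_nestAlgebra hx f⟩
      (f ∘L ContinuousLinearMap.apply ℂ X x : (X →L[ℂ] X) →L[ℂ] ℂ) where
  prime := eq_zero_or_eq_zero_of_mul_mul
  idem := by
    refine Subtype.ext (ContinuousLinearMap.ext fun y => ?_)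
    simp [hf]
  ne_zero := by
    intro h
    have h1 := congrArg (fun T : X →L[ℂ] X => f (T x)) (congrArg Subtype.val h)
    simp [hf] at h1
  corner y := by
    ext v
    simp [smul_smul, mul_comm]
  mem y := by
    have h : f.smulRight x * y = (f ∘L y).smulRight x := by
      ext v
      simp
    change f.smulRight x * y ∈ _
    rw [h]
    exact smulRight_mem_nestAlgebra hx _

end NestAlgebra

/-- (Corollary 3.16 of the paper.)  Let `X` be a complex Banach space
with `dim X > 2` and `𝒩` a non-trivial nest on `X` with `{0} ⊊ {0}₊`.  Then every Lie
`n`-derivation `L : Alg 𝒩 → B(X)` (`n ≥ 2`) decomposes as `L = D + H` with `D` a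
derivation and `H` a linear map into `ℂ I` vanishing on all `(n-1)`-th commutators;
moreover, if `L` is continuous then `D, H` can be chosen continuous. -/
theorem statement17 {X : Type*} [NormedAddCommGroup X] [NormedSpace ℂ X] [CompleteSpace X]
    (hdim : 2 < Module.rank ℂ X)
    (𝒩 : Set (Submodule ℂ X)) (hnest : IsNest 𝒩)
    (hnontrivial : 𝒩 ≠ ({⊥, ⊤} : Set (Submodule ℂ X)))
    (h0p : ⊥ < nestZeroPlus 𝒩)
    (n : ℕ) (hn : 2 ≤ n)
    (L : ↥(nestAlgebra 𝒩) →ₗ[ℂ] (X →L[ℂ] X))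
    (hL : IsLieNDeriv (nestAlgebra 𝒩) n L) :
    (∃ D H : ↥(nestAlgebra 𝒩) →ₗ[ℂ] (X →L[ℂ] X),
        IsDerivOn (nestAlgebra 𝒩) D ∧
        (∀ a : ↥(nestAlgebra 𝒩), ∃ c : ℂ, H a = c • (1 : X →L[ℂ] X)) ∧
        (∀ a : Fin n → ↥(nestAlgebra 𝒩), H (commPoly n a) = 0) ∧
        L = D + H) ∧
    (Continuous L →
      ∃ D H : ↥(nestAlgebra 𝒩) →ₗ[ℂ] (X →L[ℂ] X),
        IsDerivOn (nestAlgebra 𝒩) D ∧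
        (∀ a : ↥(nestAlgebra 𝒩), ∃ c : ℂ, H a = c • (1 : X →L[ℂ] X)) ∧
        (∀ a : Fin n → ↥(nestAlgebra 𝒩), H (commPoly n a) = 0) ∧
        L = D + H ∧ Continuous D ∧ Continuous H) := by
  obtain ⟨x, hx, hx0⟩ := (Submodule.ne_bot_iff _).mp h0p.ne'
  obtain ⟨f, hf⟩ := SeparatingDual.exists_eq_one (R := ℂ) hx0
  obtain ⟨m, rfl⟩ := Nat.exists_eq_add_of_le' hn
  have hcorner := isMinimalCorner_smulRight hx f hf
  set p : nestAlgebra 𝒩 := ⟨f.smulRight x, smulRight_mem_nestAlgebra hx f⟩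
  set τ : (X →L[ℂ] X) →L[ℂ] ℂ := f ∘L ContinuousLinearMap.apply ℂ X x
  set z : X →L[ℂ] X := p * L p - L p * p
  set K := innerDeriv (nestAlgebra 𝒩) z
  set D := scalarFree (τ : (X →L[ℂ] X) →ₗ[ℂ] ℂ) (L - K) + K
  set H := L - D
  have hD : IsDerivOn (nestAlgebra 𝒩) D :=
    (hcorner.isDerivOn_scalarFree_sub_inner hL).add (isDerivOn_innerDeriv z)
  have hHapply : ∀ a, H a = τ (L a - K a) • (1 : X →L[ℂ] X) := by
    intro a
    simp only [H, D, LinearMap.sub_apply, LinearMap.add_apply, scalarFree_apply,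
      ContinuousLinearMap.coe_coe]
    abel
  have hH0 : ∀ a : Fin (m + 2) → nestAlgebra 𝒩, H (commPoly (m + 2) a) = 0 :=
    (hL.sub (hD.isLieNDeriv _)).map_commPoly_eq_zero fun a => ⟨_, hHapply a⟩
  have hLDH : L = D + H := (add_sub_cancel D L).symm
  refine ⟨⟨D, H, hD, fun a => ⟨_, hHapply a⟩, hH0, hLDH⟩, fun hLc =>
    ⟨D, H, hD, fun a => ⟨_, hHapply a⟩, hH0, hLDH, ?_⟩⟩
  have hK : Continuous K :=
    (continuous_subtype_val.mul continuous_const).sub (continuous_const.mul continuous_subtype_val)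
  have hH : Continuous H := by
    rw [show (H : nestAlgebra 𝒩 → X →L[ℂ] X) = _ from funext hHapply]
    exact (τ.continuous.comp (hLc.sub hK)).smul continuous_const
  refine ⟨?_, hH⟩
  rw [show (D : nestAlgebra 𝒩 → X →L[ℂ] X) = fun a => L a - H a from
    funext fun a => by simp [H]]
  exact hLc.sub hH
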